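/- For each i ∈ {1, 2, 3}: if (u, v) ∈ E and v ∈ s₍₂ᵢ₋₁₎ᵘ, then v is the <ᵢ-minimum of the sector s₍₂ᵢ₋₁₎ᵘ, i.e. v <ᵢ z for every z ∈ s₍₂ᵢ₋₁₎ᵘ with z ≠ v. -/

import Mathlib

/-!
A vertex `z` of the odd sector `s_{2i-1}` of `u` lies above `u` only in the order `<ᵢ`. Hence, for
an edge `(u, v)` and `z ∉ {u, v}`, the order supplied by the second Schnyder condition, in which
both `u` and `v` lie below `z`, can only be `<ᵢ`.
-/

/-- Sector 1 of `u`: `v ∈ s₁ᵘ` iff `u <₁ v`, `v <₂ u`, `v <₃ u`. -/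
def Sect1 {V : Type*} (lt : Fin 3 → V → V → Prop) (u v : V) : Prop :=
  lt 0 u v ∧ lt 1 v u ∧ lt 2 v u

/-- Sector 2 of `u`: `v ∈ s₂ᵘ` iff `u <₁ v`, `u <₂ v`, `v <₃ u`. -/
def Sect2 {V : Type*} (lt : Fin 3 → V → V → Prop) (u v : V) : Prop :=
  lt 0 u v ∧ lt 1 u v ∧ lt 2 v u

/-- Sector 3 of `u`: `v ∈ s₃ᵘ` iff `v <₁ u`, `u <₂ v`, `v <₃ u`. -/
def Sect3 {V : Type*} (lt : Fin 3 → V → V → Prop) (u v : V) : Prop :=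
  lt 0 v u ∧ lt 1 u v ∧ lt 2 v u

/-- Sector 4 of `u`: `v ∈ s₄ᵘ` iff `v <₁ u`, `u <₂ v`, `u <₃ v`. -/
def Sect4 {V : Type*} (lt : Fin 3 → V → V → Prop) (u v : V) : Prop :=
  lt 0 v u ∧ lt 1 u v ∧ lt 2 u v

/-- Sector 5 of `u`: `v ∈ s₅ᵘ` iff `v <₁ u`, `v <₂ u`, `u <₃ v`. -/
def Sect5 {V : Type*} (lt : Fin 3 → V → V → Prop) (u v : V) : Prop :=
  lt 0 v u ∧ lt 1 v u ∧ lt 2 u v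

/-- Sector 6 of `u`: `v ∈ s₆ᵘ` iff `u <₁ v`, `v <₂ u`, `u <₃ v`. -/
def Sect6 {V : Type*} (lt : Fin 3 → V → V → Prop) (u v : V) : Prop :=
  lt 0 u v ∧ lt 1 v u ∧ lt 2 u v

/-- `Sector lt j u v` means `v ∈ s_{j+1}ᵘ` (sectors indexed by `Fin 6`). -/
def Sector {V : Type*} (lt : Fin 3 → V → V → Prop) : Fin 6 → V → V → Prop
  | 0 => Sect1 lt
  | 1 => Sect2 lt
  | 2 => Sect3 lt
  | 3 => Sect4 lt
  | 4 => Sect5 lt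
  | 5 => Sect6 lt

/-- `SectOdd lt i u v` means `v ∈ s_{2(i+1)-1}ᵘ`, i.e. the odd sectors `s₁ᵘ, s₃ᵘ, s₅ᵘ`. -/
def SectOdd {V : Type*} (lt : Fin 3 → V → V → Prop) : Fin 3 → V → V → Prop
  | 0 => Sect1 lt
  | 1 => Sect3 lt
  | 2 => Sect5 lt

/-- A vertex of the odd sector attached to `i` can lie above `u` only in the order `lt i`. -/
theorem SectOdd.eq_of_lt {V : Type*} {lt : Fin 3 → V → V → Prop}
    (hlt : ∀ i, IsStrictTotalOrder V (lt i)) {i j : Fin 3} {u z : V}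
    (hz : SectOdd lt i u z) (hj : lt j u z) : j = i := by
  have asymm : ∀ k, lt k u z → ¬ lt k z u := fun k h h' =>
    have := hlt k
    irrefl_of (lt k) u (trans_of (lt k) h h')
  fin_cases i <;> fin_cases j <;>
    simp_all [SectOdd, Sect1, Sect3, Sect5]

theorem SectOdd.ne {V : Type*} {lt : Fin 3 → V → V → Prop}
    (hlt : ∀ i, IsStrictTotalOrder V (lt i)) {i : Fin 3} {u z : V}
    (hz : SectOdd lt i u z) : z ≠ u := by
  rintro rfl
  have irr : ∀ k, ¬ lt k z z := fun k =>
    have := hlt k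
    irrefl_of (lt k) z
  fin_cases i <;> simp_all [SectOdd, Sect1, Sect3, Sect5]

theorem stmt_6 {V : Type*} [Fintype V] (E : V → V → Prop) (lt : Fin 3 → V → V → Prop)
    (hsym : ∀ x y : V, E x y → E y x)
    (hlt : ∀ i, IsStrictTotalOrder V (lt i))
    (ha : ∀ x y : V, x ≠ y → ¬ ∀ i, lt i x y)
    (hb : ∀ x y z : V, E x y → z ≠ x → z ≠ y → ∃ i, lt i x z ∧ lt i y z)
    (i : Fin 3) (u v : V) (huv : E u v) (hv : SectOdd lt i u v) :
    ∀ z : V, SectOdd lt i u z → z ≠ v → lt i v z := by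
  intro z hz hzv
  obtain ⟨j, huz, hvz⟩ := hb u v z huv (hz.ne hlt) hzv
  exact hz.eq_of_lt hlt huz ▸ hvz
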